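/- Let r ≥ 1, let G be an r-regular finite simple graph on n vertices, k ≥ 0 an integer, S(G) the 3k-subdivision of G, and P a perfect edge dominating set of S(G). Then |P| ≥ (nr/(2(2r-1)))·(2rk - k + 1). -/

import Mathlib

/-- An edge `e` dominates an edge `f` if they share an endpoint (in particular,
every edge dominates itself). -/
def edgeDom {V : Type*} (e f : Sym2 V) : Prop := ∃ v, v ∈ e ∧ v ∈ f

/-- `P` is a perfect edge dominating set of `G`. -/
def IsPEDS {V : Type*} (G : SimpleGraph V) (P : Set (Sym2 V)) : Prop :=
  P ⊆ G.edgeSet ∧ ∀ f ∈ G.edgeSet, f ∉ P → ∃! e, e ∈ P ∧ edgeDom e f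

/-- `H` is the `3k`-subdivision of `G`, witnessed by the map `ι : V → W`
(the images of the original vertices, "extremes") and, for every ordered pair
`(v, w)` of adjacent vertices, the path `p v w 0, p v w 1, …, p v w (3k+1)`
replacing the edge `vw` (so `p v w 0 = ι v`, `p v w (3k+1) = ι w`, the `3k`
internal vertices are new, pairwise distinct, distinct for distinct edges of `G`,
and the edges of `H` are exactly the consecutive pairs of these paths).
For `k = 0` the subdivision is `G` itself. -/
def IsSubdivision {V W : Type*} (G : SimpleGraph V) (k : ℕ) (H : SimpleGraph W)
    (ι : V → W) (p : V → V → ℕ → W) : Prop :=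
  Function.Injective ι ∧
  (∀ v w, G.Adj v w → p v w 0 = ι v ∧ p v w (3 * k + 1) = ι w) ∧
  (∀ v w, G.Adj v w → ∀ i ≤ 3 * k + 1, p v w i = p w v (3 * k + 1 - i)) ∧
  (∀ v w, G.Adj v w → ∀ i ≤ 3 * k + 1, ∀ j ≤ 3 * k + 1, p v w i = p v w j → i = j) ∧
  (∀ v w, G.Adj v w → ∀ i, 0 < i → i < 3 * k + 1 → p v w i ∉ Set.range ι) ∧
  (∀ v w v' w', G.Adj v w → G.Adj v' w' → ∀ i j, 0 < i → i < 3 * k + 1 →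
      0 < j → j < 3 * k + 1 → p v w i = p v' w' j → s(v, w) = s(v', w')) ∧
  (∀ x : W, (∃ v, x = ι v) ∨
      ∃ v w i, G.Adj v w ∧ 0 < i ∧ i < 3 * k + 1 ∧ x = p v w i) ∧
  (∀ x y : W, H.Adj x y ↔ ∃ v w i, G.Adj v w ∧ i ≤ 3 * k ∧
      ((x = p v w i ∧ y = p v w (i + 1)) ∨ (y = p v w i ∧ x = p v w (i + 1))))

/-- The edge set `S(e)` of the path of the subdivision replacing the edge
`e = vw` of `G`: the edges `e_0, e_1, …, e_{3k}`. -/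
def pathEdges {V W : Type*} (p : V → V → ℕ → W) (k : ℕ) (v w : V) :
    Set (Sym2 W) :=
  {e | ∃ i ≤ 3 * k, e = s(p v w i, p v w (i + 1))}

/-- `G` is `r`-regular: every vertex has exactly `r` neighbors. -/
def IsRegular' {V : Type*} (G : SimpleGraph V) (r : ℕ) : Prop :=
  ∀ v : V, (G.neighborSet v).ncard = r

/-!
An edge of the path `S(e)` dominates at most three edges of `S(e)`, and all edges of `S(e)` except
possibly its first and last are dominated from within `S(e)`; hence `P` has at least `k` edges on
each `S(e)`. Call `e` heavy if it has at least `k + 1`. If `P` contains an end edge of `S(e)`, then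
`e` is heavy, because an end edge dominates only two edges of `S(e)`. If `e` is not heavy, then
`3k` is too few for the `3k + 1` edges of `S(e)`, so an end edge of `S(e)` is dominated from
outside, by an end edge of some `S(f)` with `f` heavy and adjacent to `e`. So the heavy edges form
an edge dominating set of `G`, and as an edge of `G` dominates at most `2r - 1` edges, there are at
least `|E(G)| / (2r - 1)` of them. Therefore `|P| ≥ k |E(G)| + |E(G)| / (2r - 1)`, and
`|E(G)| = nr / 2`.
-/

section EdgeDomination

variable {V : Type*} {G : SimpleGraph V} {P : Set (Sym2 V)}

lemma edgeDom_refl (e : Sym2 V) : edgeDom e e := by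
  induction e with
  | _ v w => exact ⟨v, Sym2.mem_mk_left v w, Sym2.mem_mk_left v w⟩

/-- `P` is an edge dominating set of `G`: perfect domination without the uniqueness. Edges of `P`
need not be excluded from the second condition, since every edge dominates itself. -/
def IsEdgeDominating (G : SimpleGraph V) (P : Set (Sym2 V)) : Prop :=
  P ⊆ G.edgeSet ∧ ∀ f ∈ G.edgeSet, ∃ e ∈ P, edgeDom e f

lemma IsPEDS.isEdgeDominating (hP : IsPEDS G P) : IsEdgeDominating G P := by
  refine ⟨hP.1, fun f hf ↦ ?_⟩
  by_cases hfP : f ∈ P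
  · exact ⟨f, hfP, edgeDom_refl f⟩
  · exact (hP.2 f hf hfP).exists

lemma ncard_incidenceSet (G : SimpleGraph V) (v : V) :
    (G.incidenceSet v).ncard = (G.neighborSet v).ncard := by
  classical
  exact Set.ncard_congr' (G.incidenceSetEquivNeighborSet v)

lemma IsRegular'.card_mul_eq_two_mul_ncard_edgeSet [Fintype V] {r : ℕ} (hG : IsRegular' G r) :
    Fintype.card V * r = 2 * G.edgeSet.ncard := by
  classical
  have hdeg (v : V) : G.degree v = r := by
    rw [← hG v, Set.ncard_eq_toFinset_card', SimpleGraph.degree, SimpleGraph.neighborFinset]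
  rw [Set.ncard_eq_toFinset_card', ← SimpleGraph.edgeFinset,
    ← G.sum_degrees_eq_twice_card_edges]
  simp [hdeg]

lemma ncard_edgeDom_le [Finite V] {r : ℕ} (hdeg : ∀ v, (G.neighborSet v).ncard ≤ r) {e : Sym2 V}
    (he : e ∈ G.edgeSet) : {f ∈ G.edgeSet | edgeDom e f}.ncard ≤ 2 * r - 1 := by
  induction e with
  | _ v w =>
    have hsub : {f ∈ G.edgeSet | edgeDom s(v, w) f} ⊆ G.incidenceSet v ∪ G.incidenceSet w := by
      rintro f ⟨hf, u, hu, huf⟩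
      rcases Sym2.mem_iff.1 hu with rfl | rfl
      exacts [Or.inl ⟨hf, huf⟩, Or.inr ⟨hf, huf⟩]
    have hcard := Set.ncard_union_add_ncard_inter (G.incidenceSet v) (G.incidenceSet w)
      (Set.toFinite _) (Set.toFinite _)
    rw [G.incidenceSet_inter_incidenceSet_of_adj he, Set.ncard_singleton, ncard_incidenceSet,
      ncard_incidenceSet] at hcard
    have := Set.ncard_le_ncard hsub (Set.toFinite _)
    have := hdeg v
    have := hdeg w
    omega

lemma IsEdgeDominating.ncard_edgeSet_le [Finite V] {r : ℕ}
    (hdeg : ∀ v, (G.neighborSet v).ncard ≤ r) (hP : IsEdgeDominating G P) :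
    G.edgeSet.ncard ≤ P.ncard * (2 * r - 1) := by
  have hcover : G.edgeSet ⊆ ⋃ e ∈ P, {f ∈ G.edgeSet | edgeDom e f} := fun f hf ↦ by
    obtain ⟨e, heP, hef⟩ := hP.2 f hf
    exact Set.mem_biUnion heP ⟨hf, hef⟩
  lift P to Finset (Sym2 V) using Set.toFinite P
  calc G.edgeSet.ncard
      ≤ (⋃ e ∈ P, {f ∈ G.edgeSet | edgeDom e f}).ncard :=
        Set.ncard_le_ncard hcover (Set.toFinite _)
    _ ≤ ∑ e ∈ P, {f ∈ G.edgeSet | edgeDom e f}.ncard := P.set_ncard_biUnion_le _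
    _ ≤ P.card * (2 * r - 1) :=
        P.sum_le_card_nsmul _ _ fun e he ↦ ncard_edgeDom_le hdeg (hP.1 he)
    _ = (P : Set (Sym2 V)).ncard * (2 * r - 1) := by rw [Set.ncard_coe_finset]

end EdgeDomination

section Counting

lemma card_le_three_mul_card_of_near {S T : Finset ℕ}
    (h : ∀ t ∈ T, ∃ s ∈ S, t ≤ s + 1 ∧ s ≤ t + 1) :
    T.card ≤ 3 * S.card := by
  have hcover : T ⊆ S.biUnion fun s ↦ Finset.Icc (s - 1) (s + 1) := fun t ht ↦ by
    obtain ⟨s, hs, hts, hst⟩ := h t ht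
    exact Finset.mem_biUnion.2 ⟨s, hs, Finset.mem_Icc.2 ⟨by omega, hts⟩⟩
  rw [mul_comm]
  refine (Finset.card_le_card hcover).trans (Finset.card_biUnion_le_card_mul _ _ _ fun s _ ↦ ?_)
  rw [Nat.card_Icc]
  omega

lemma sum_ncard_inter_le {α β : Type*} {s : Finset α} {S : α → Set β}
    (hS : (s : Set α).PairwiseDisjoint S) {P : Set β} (hP : P.Finite) :
    ∑ a ∈ s, (P ∩ S a).ncard ≤ P.ncard := by
  have hdisj : (s : Set α).PairwiseDisjoint fun a ↦ P ∩ S a :=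
    hS.mono fun a ↦ Set.inter_subset_right
  rw [← finsum_mem_coe_finset,
    ← s.finite_toSet.ncard_biUnion (fun a _ ↦ hP.subset Set.inter_subset_left) hdisj]
  exact Set.ncard_le_ncard (Set.iUnion₂_subset fun a _ ↦ Set.inter_subset_left) hP

end Counting

section Subdivision

variable {V W : Type*} {G : SimpleGraph V} {k : ℕ} {H : SimpleGraph W} {ι : V → W}
  {p : V → V → ℕ → W} {P : Set (Sym2 W)} {v w a b : V} {i j : ℕ} {e : Sym2 W}

/-- The edge `e_i` of the path replacing the edge `vw`, numbered from the end at `v`. -/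
def pathEdge (p : V → V → ℕ → W) (v w : V) (i : ℕ) : Sym2 W := s(p v w i, p v w (i + 1))

/-- The edge set `S(e)` of the path replacing `e`, as a function of the unordered pair `e`. The
union over both orientations makes it well defined for an arbitrary `p`; in a subdivision they
give the same set. -/
def subdividedEdge (p : V → V → ℕ → W) (k : ℕ) (e : Sym2 V) : Set (Sym2 W) :=
  {f | ∃ v w, e = s(v, w) ∧ f ∈ pathEdges p k v w}

/-- The edges `e` of `G` for which `P` has more than `k` edges on `S(e)`. -/
def heavyEdges (G : SimpleGraph V) (p : V → V → ℕ → W) (k : ℕ) (P : Set (Sym2 W)) :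
    Set (Sym2 V) :=
  {e ∈ G.edgeSet | k < (P ∩ subdividedEdge p k e).ncard}

open Classical in
/-- The positions `i` on the path replacing `vw` for which `e_i` belongs to `P`. -/
noncomputable def chosenIndices (p : V → V → ℕ → W) (k : ℕ) (P : Set (Sym2 W)) (v w : V) :
    Finset ℕ :=
  {i ∈ Finset.range (3 * k + 1) | pathEdge p v w i ∈ P}

lemma mem_chosenIndices : i ∈ chosenIndices p k P v w ↔ i ≤ 3 * k ∧ pathEdge p v w i ∈ P := by
  simp [chosenIndices]

namespace IsSubdivision

lemma extreme_injective (hs : IsSubdivision G k H ι p) : Function.Injective ι := hs.1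

lemma path_zero (hs : IsSubdivision G k H ι p) (hvw : G.Adj v w) : p v w 0 = ι v :=
  (hs.2.1 v w hvw).1

lemma path_last (hs : IsSubdivision G k H ι p) (hvw : G.Adj v w) : p v w (3 * k + 1) = ι w :=
  (hs.2.1 v w hvw).2

lemma path_reverse (hs : IsSubdivision G k H ι p) (hvw : G.Adj v w) (hi : i ≤ 3 * k + 1) :
    p v w i = p w v (3 * k + 1 - i) :=
  hs.2.2.1 v w hvw i hi

lemma eq_of_path_eq (hs : IsSubdivision G k H ι p) (hvw : G.Adj v w) (hi : i ≤ 3 * k + 1)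
    (hj : j ≤ 3 * k + 1) (h : p v w i = p v w j) : i = j :=
  hs.2.2.2.1 v w hvw i hi j hj h

lemma path_ne_extreme (hs : IsSubdivision G k H ι p) (hvw : G.Adj v w) (hi₀ : 0 < i)
    (hi : i < 3 * k + 1) (a : V) : p v w i ≠ ι a :=
  fun h ↦ hs.2.2.2.2.1 v w hvw i hi₀ hi ⟨a, h.symm⟩

lemma adj_iff (hs : IsSubdivision G k H ι p) {x y : W} :
    H.Adj x y ↔ ∃ v w i, G.Adj v w ∧ i ≤ 3 * k ∧
      ((x = p v w i ∧ y = p v w (i + 1)) ∨ (y = p v w i ∧ x = p v w (i + 1))) :=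
  hs.2.2.2.2.2.2.2 x y

lemma eq_or_reverse_of_path_eq (hs : IsSubdivision G k H ι p) (hvw : G.Adj v w)
    (hab : G.Adj a b) (hi₀ : 0 < i) (hi : i < 3 * k + 1) (hj : j ≤ 3 * k + 1)
    (h : p v w i = p a b j) :
    (a = v ∧ b = w ∧ j = i) ∨ (a = w ∧ b = v ∧ j = 3 * k + 1 - i) := by
  have hj₀ : j ≠ 0 := by
    rintro rfl
    exact hs.path_ne_extreme hvw hi₀ hi a (h.trans (hs.path_zero hab))
  have hj₁ : j ≠ 3 * k + 1 := by
    rintro rfl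
    exact hs.path_ne_extreme hvw hi₀ hi b (h.trans (hs.path_last hab))
  have hedge : s(v, w) = s(a, b) :=
    hs.2.2.2.2.2.1 v w a b hvw hab i j hi₀ hi (by omega) (by omega) h
  rcases Sym2.eq_iff.1 hedge with ⟨rfl, rfl⟩ | ⟨rfl, rfl⟩
  · exact Or.inl ⟨rfl, rfl, hs.eq_of_path_eq hvw hj hi.le h.symm⟩
  · rw [hs.path_reverse hvw hi.le] at h
    exact Or.inr ⟨rfl, rfl, hs.eq_of_path_eq hab hj (by omega) h.symm⟩

lemma pathEdge_reverse (hs : IsSubdivision G k H ι p) (hvw : G.Adj v w) (hi : i ≤ 3 * k) :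
    pathEdge p v w i = pathEdge p w v (3 * k - i) := by
  rw [pathEdge, pathEdge, hs.path_reverse hvw (by omega : i ≤ 3 * k + 1),
    hs.path_reverse hvw (by omega : i + 1 ≤ 3 * k + 1), Sym2.eq_swap,
    show 3 * k + 1 - (i + 1) = 3 * k - i by omega, show 3 * k + 1 - i = 3 * k - i + 1 by omega]

lemma pathEdge_mem_edgeSet (hs : IsSubdivision G k H ι p) (hvw : G.Adj v w) (hi : i ≤ 3 * k) :
    pathEdge p v w i ∈ H.edgeSet :=
  hs.adj_iff.2 ⟨v, w, i, hvw, hi, Or.inl ⟨rfl, rfl⟩⟩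

lemma exists_eq_pathEdge (hs : IsSubdivision G k H ι p) (he : e ∈ H.edgeSet) :
    ∃ a b j, G.Adj a b ∧ j ≤ 3 * k ∧ e = pathEdge p a b j := by
  induction e with
  | _ x y =>
    obtain ⟨a, b, j, hab, hj, ⟨rfl, rfl⟩ | ⟨rfl, rfl⟩⟩ := hs.adj_iff.1 he
    · exact ⟨a, b, j, hab, hj, rfl⟩
    · exact ⟨a, b, j, hab, hj, Sym2.eq_swap⟩

lemma exists_eq_pathEdge_of_mem (hs : IsSubdivision G k H ι p) (he : e ∈ H.edgeSet) {x : W}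
    (hx : x ∈ e) : ∃ a b j, G.Adj a b ∧ j ≤ 3 * k ∧ x = p a b j ∧ e = pathEdge p a b j := by
  obtain ⟨a, b, j, hab, hj, rfl⟩ := hs.exists_eq_pathEdge he
  rcases Sym2.mem_iff.1 hx with rfl | rfl
  · exact ⟨a, b, j, hab, hj, rfl, rfl⟩
  · refine ⟨b, a, 3 * k - j, hab.symm, by omega, ?_, hs.pathEdge_reverse hab hj⟩
    rw [hs.path_reverse hab (by omega), Nat.add_sub_add_right]

lemma exists_eq_pathEdge_zero_of_extreme_mem (hs : IsSubdivision G k H ι p)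
    (he : e ∈ H.edgeSet) (hv : ι v ∈ e) : ∃ x, G.Adj v x ∧ e = pathEdge p v x 0 := by
  obtain ⟨a, b, j, hab, hj, hvj, rfl⟩ := hs.exists_eq_pathEdge_of_mem he hv
  obtain rfl | hj₀ := j.eq_zero_or_pos
  · obtain rfl := hs.extreme_injective (hvj.trans (hs.path_zero hab))
    exact ⟨b, hab, rfl⟩
  · exact absurd hvj.symm (hs.path_ne_extreme hab hj₀ (by omega) v)

lemma exists_eq_pathEdge_of_path_mem (hs : IsSubdivision G k H ι p) (he : e ∈ H.edgeSet)
    (hvw : G.Adj v w) (hi₀ : 0 < i) (hi : i < 3 * k + 1) (hmem : p v w i ∈ e) :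
    ∃ j ≤ 3 * k, j ≤ i ∧ i ≤ j + 1 ∧ e = pathEdge p v w j := by
  obtain ⟨a, b, j, hab, hj, hij, rfl⟩ := hs.exists_eq_pathEdge_of_mem he hmem
  rcases hs.eq_or_reverse_of_path_eq hvw hab hi₀ hi (by omega) hij with
    ⟨rfl, rfl, rfl⟩ | ⟨rfl, rfl, rfl⟩
  · exact ⟨j, hj, le_rfl, by omega, rfl⟩
  · exact ⟨3 * k - (3 * k + 1 - i), by omega, by omega, by omega, hs.pathEdge_reverse hab hj⟩

lemma pathEdge_injOn (hs : IsSubdivision G k H ι p) (hvw : G.Adj v w) :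
    Set.InjOn (pathEdge p v w) (Set.Iic (3 * k)) := by
  intro i hi j hj h
  rw [Set.mem_Iic] at hi hj
  rcases Sym2.eq_iff.1 h with ⟨h₁, -⟩ | ⟨h₁, h₂⟩
  · exact hs.eq_of_path_eq hvw (by omega) (by omega) h₁
  · have := hs.eq_of_path_eq hvw (by omega) (by omega) h₁
    have := hs.eq_of_path_eq hvw (by omega) (by omega) h₂
    omega

lemma sym2_eq_of_pathEdge_eq (hs : IsSubdivision G k H ι p) (hvw : G.Adj v w) (hab : G.Adj a b)
    (hi : i ≤ 3 * k) (hj : j ≤ 3 * k) (h : pathEdge p v w i = pathEdge p a b j) :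
    s(v, w) = s(a, b) := by
  obtain rfl | hk := k.eq_zero_or_pos
  · obtain rfl : i = 0 := by omega
    obtain rfl : j = 0 := by omega
    have hext {x y : V} (hxy : G.Adj x y) : pathEdge p x y 0 = Sym2.map ι s(x, y) :=
      congrArg₂ (s(·, ·)) (hs.path_zero hxy) (hs.path_last hxy)
    rw [hext hvw, hext hab] at h
    exact Sym2.map.injective hs.extreme_injective h
  · obtain ⟨m, hm₀, hm, hmem⟩ : ∃ m, 0 < m ∧ m < 3 * k + 1 ∧ p v w m ∈ pathEdge p v w i := by
      obtain rfl | hi₀ := i.eq_zero_or_pos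
      · exact ⟨1, one_pos, by omega, Sym2.mem_mk_right _ _⟩
      · exact ⟨i, hi₀, by omega, Sym2.mem_mk_left _ _⟩
    obtain ⟨l, hl, hml⟩ : ∃ l ≤ 3 * k + 1, p v w m = p a b l := by
      rcases Sym2.mem_iff.1 (h ▸ hmem) with hml | hml
      exacts [⟨j, by omega, hml⟩, ⟨j + 1, by omega, hml⟩]
    rcases hs.eq_or_reverse_of_path_eq hvw hab hm₀ hm hl hml with
      ⟨rfl, rfl, -⟩ | ⟨rfl, rfl, -⟩
    exacts [rfl, Sym2.eq_swap]

lemma pathEdges_comm (hs : IsSubdivision G k H ι p) (hvw : G.Adj v w) :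
    pathEdges p k v w = pathEdges p k w v := by
  have hsub {x y : V} (hxy : G.Adj x y) : pathEdges p k x y ⊆ pathEdges p k y x := by
    rintro _ ⟨i, hi, rfl⟩
    exact ⟨3 * k - i, by omega, hs.pathEdge_reverse hxy hi⟩
  exact (hsub hvw).antisymm (hsub hvw.symm)

lemma subdividedEdge_mk (hs : IsSubdivision G k H ι p) (hvw : G.Adj v w) :
    subdividedEdge p k s(v, w) = pathEdges p k v w := by
  ext f
  refine ⟨?_, fun hf ↦ ⟨v, w, rfl, hf⟩⟩
  rintro ⟨a, b, hab, hf⟩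
  rcases Sym2.eq_iff.1 hab with ⟨rfl, rfl⟩ | ⟨rfl, rfl⟩
  exacts [hf, (hs.pathEdges_comm hvw).symm ▸ hf]

lemma pairwiseDisjoint_subdividedEdge (hs : IsSubdivision G k H ι p) :
    G.edgeSet.PairwiseDisjoint (subdividedEdge p k) := by
  intro e he e' he' hne
  refine Set.disjoint_left.2 ?_
  rintro f ⟨v, w, rfl, i, hi, rfl⟩ ⟨a, b, rfl, j, hj, hij⟩
  exact hne (hs.sym2_eq_of_pathEdge_eq he he' hi hj hij)

lemma edgeSet_finite [Finite V] (hs : IsSubdivision G k H ι p) : H.edgeSet.Finite := by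
  have hcover : H.edgeSet ⊆ ⋃ v, ⋃ w, pathEdge p v w '' Set.Iic (3 * k) := fun e he ↦ by
    obtain ⟨a, b, j, -, hj, rfl⟩ := hs.exists_eq_pathEdge he
    exact Set.mem_iUnion₂.2 ⟨a, b, j, hj, rfl⟩
  exact (Set.finite_iUnion fun v ↦ Set.finite_iUnion fun w ↦
    (Set.finite_Iic _).image _).subset hcover

lemma card_chosenIndices (hs : IsSubdivision G k H ι p) (hvw : G.Adj v w) :
    (chosenIndices p k P v w).card = (P ∩ subdividedEdge p k s(v, w)).ncard := by
  have himage : P ∩ subdividedEdge p k s(v, w) =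
      pathEdge p v w '' (chosenIndices p k P v w : Set ℕ) := by
    rw [hs.subdividedEdge_mk hvw]
    ext f
    constructor
    · rintro ⟨hf, i, hi, rfl⟩
      exact ⟨i, mem_chosenIndices.2 ⟨hi, hf⟩, rfl⟩
    · rintro ⟨i, hi, rfl⟩
      obtain ⟨hi, hiP⟩ := mem_chosenIndices.1 hi
      exact ⟨hiP, i, hi, rfl⟩
  rw [himage, Set.InjOn.ncard_image, Set.ncard_coe_finset]
  exact (hs.pathEdge_injOn hvw).mono fun i hi ↦ (mem_chosenIndices.1 hi).1

lemma exists_chosen_near_or_extreme (hs : IsSubdivision G k H ι p) (hP : IsEdgeDominating H P)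
    (hvw : G.Adj v w) (hi : i ≤ 3 * k) :
    (∃ j ∈ chosenIndices p k P v w, i ≤ j + 1 ∧ j ≤ i + 1) ∨
      (i = 0 ∧ ∃ e ∈ P, ι v ∈ e) ∨ (i = 3 * k ∧ ∃ e ∈ P, ι w ∈ e) := by
  obtain ⟨e, heP, x, hxe, hx⟩ := hP.2 _ (hs.pathEdge_mem_edgeSet hvw hi)
  have hnear {m : ℕ} (hm : m ≤ i + 1) (hm' : i ≤ m) (hm₀ : 0 < m) (hmk : m < 3 * k + 1)
      (hme : p v w m ∈ e) : ∃ j ∈ chosenIndices p k P v w, i ≤ j + 1 ∧ j ≤ i + 1 := by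
    obtain ⟨j, hj, hjm, hmj, rfl⟩ :=
      hs.exists_eq_pathEdge_of_path_mem (hP.1 heP) hvw hm₀ hmk hme
    exact ⟨j, mem_chosenIndices.2 ⟨hj, heP⟩, by omega, by omega⟩
  rcases Sym2.mem_iff.1 hx with rfl | rfl
  · obtain rfl | hi₀ := i.eq_zero_or_pos
    · exact Or.inr (Or.inl ⟨rfl, e, heP, hs.path_zero hvw ▸ hxe⟩)
    · exact Or.inl (hnear (by omega) le_rfl hi₀ (by omega) hxe)
  · obtain rfl | hik := hi.eq_or_lt
    · exact Or.inr (Or.inr ⟨rfl, e, heP, hs.path_last hvw ▸ hxe⟩)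
    · exact Or.inl (hnear le_rfl (by omega) (by omega) (by omega) hxe)

lemma exists_chosen_near (hs : IsSubdivision G k H ι p) (hP : IsEdgeDominating H P)
    (hvw : G.Adj v w) (hi₀ : 0 < i) (hi : i < 3 * k) :
    ∃ j ∈ chosenIndices p k P v w, i ≤ j + 1 ∧ j ≤ i + 1 := by
  rcases hs.exists_chosen_near_or_extreme hP hvw hi.le with h | ⟨rfl, -⟩ | ⟨rfl, -⟩
  exacts [h, absurd hi₀ (lt_irrefl _), absurd hi (lt_irrefl _)]

lemma le_card_chosenIndices (hs : IsSubdivision G k H ι p) (hP : IsEdgeDominating H P)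
    (hvw : G.Adj v w) : k ≤ (chosenIndices p k P v w).card := by
  have hcard : (Finset.Ioo 0 (3 * k)).card ≤ 3 * (chosenIndices p k P v w).card :=
    card_le_three_mul_card_of_near fun i hi ↦ by
      rw [Finset.mem_Ioo] at hi
      exact hs.exists_chosen_near hP hvw hi.1 hi.2
  rw [Nat.card_Ioo] at hcard
  omega

lemma lt_card_chosenIndices_of_zero_mem (hs : IsSubdivision G k H ι p)
    (hP : IsEdgeDominating H P) (hvw : G.Adj v w) (h₀ : 0 ∈ chosenIndices p k P v w) :
    k < (chosenIndices p k P v w).card := by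
  have hcard : (Finset.Ico 2 (3 * k)).card ≤ 3 * ((chosenIndices p k P v w).erase 0).card :=
    card_le_three_mul_card_of_near fun i hi ↦ by
      rw [Finset.mem_Ico] at hi
      obtain ⟨j, hj, hij, hji⟩ := hs.exists_chosen_near hP hvw (by omega) hi.2
      exact ⟨j, Finset.mem_erase.2 ⟨by omega, hj⟩, hij, hji⟩
  rw [Nat.card_Ico] at hcard
  have := Finset.card_erase_add_one h₀
  omega

lemma lt_card_chosenIndices_or_extreme (hs : IsSubdivision G k H ι p)
    (hP : IsEdgeDominating H P) (hvw : G.Adj v w) :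
    k < (chosenIndices p k P v w).card ∨ (∃ e ∈ P, ι v ∈ e) ∨ ∃ e ∈ P, ι w ∈ e := by
  by_contra! ⟨hlight, hv, hw⟩
  have hcard : (Finset.range (3 * k + 1)).card ≤ 3 * (chosenIndices p k P v w).card :=
    card_le_three_mul_card_of_near fun i hi ↦ by
      rcases hs.exists_chosen_near_or_extreme hP hvw (Finset.mem_range_succ_iff.1 hi) with
        h | ⟨-, e, heP, he⟩ | ⟨-, e, heP, he⟩
      exacts [h, absurd he (hv e heP), absurd he (hw e heP)]
  rw [Finset.card_range] at hcard
  omega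

lemma exists_mem_heavyEdges_of_extreme_mem (hs : IsSubdivision G k H ι p)
    (hP : IsEdgeDominating H P) (heP : e ∈ P) (hv : ι v ∈ e) :
    ∃ f ∈ heavyEdges G p k P, v ∈ f := by
  obtain ⟨x, hvx, rfl⟩ := hs.exists_eq_pathEdge_zero_of_extreme_mem (hP.1 heP) hv
  have h₀ : 0 ∈ chosenIndices p k P v x := mem_chosenIndices.2 ⟨Nat.zero_le _, heP⟩
  refine ⟨s(v, x), ⟨hvx, ?_⟩, Sym2.mem_mk_left v x⟩
  rw [← hs.card_chosenIndices hvx]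
  exact hs.lt_card_chosenIndices_of_zero_mem hP hvx h₀

lemma isEdgeDominating_heavyEdges (hs : IsSubdivision G k H ι p) (hP : IsEdgeDominating H P) :
    IsEdgeDominating G (heavyEdges G p k P) := by
  refine ⟨Set.sep_subset _ _, fun f hf ↦ ?_⟩
  induction f with
  | _ v w =>
    rcases hs.lt_card_chosenIndices_or_extreme hP hf with h | ⟨e, heP, hv⟩ | ⟨e, heP, hw⟩
    · exact ⟨s(v, w), ⟨hf, hs.card_chosenIndices hf ▸ h⟩, edgeDom_refl _⟩
    · obtain ⟨f, hf, hvf⟩ := hs.exists_mem_heavyEdges_of_extreme_mem hP heP hv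
      exact ⟨f, hf, v, hvf, Sym2.mem_mk_left v w⟩
    · obtain ⟨f, hf, hwf⟩ := hs.exists_mem_heavyEdges_of_extreme_mem hP heP hw
      exact ⟨f, hf, w, hwf, Sym2.mem_mk_right v w⟩

lemma le_ncard_inter_subdividedEdge (hs : IsSubdivision G k H ι p) (hP : IsEdgeDominating H P)
    {e : Sym2 V} (he : e ∈ G.edgeSet) : k ≤ (P ∩ subdividedEdge p k e).ncard := by
  induction e with
  | _ v w =>
    rw [← hs.card_chosenIndices he]
    exact hs.le_card_chosenIndices hP he

lemma mul_ncard_edgeSet_add_ncard_heavyEdges_le [Finite V] (hs : IsSubdivision G k H ι p)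
    (hP : IsEdgeDominating H P) :
    k * G.edgeSet.ncard + (heavyEdges G p k P).ncard ≤ P.ncard := by
  classical
  have : Fintype G.edgeSet := Fintype.ofFinite _
  have hheavy : heavyEdges G p k P =
      ({e ∈ G.edgeFinset | k < (P ∩ subdividedEdge p k e).ncard} : Finset (Sym2 V)) := by
    ext e
    simp [heavyEdges]
  calc k * G.edgeSet.ncard + (heavyEdges G p k P).ncard
      = ∑ e ∈ G.edgeFinset,
          (k + if k < (P ∩ subdividedEdge p k e).ncard then 1 else 0) := by
        rw [hheavy, Set.ncard_coe_finset, Finset.card_filter, Finset.sum_add_distrib,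
          Finset.sum_const, smul_eq_mul, mul_comm, ← G.coe_edgeFinset, Set.ncard_coe_finset]
    _ ≤ ∑ e ∈ G.edgeFinset, (P ∩ subdividedEdge p k e).ncard :=
        Finset.sum_le_sum fun e he ↦ by
          have := hs.le_ncard_inter_subdividedEdge hP (SimpleGraph.mem_edgeFinset.1 he)
          split_ifs <;> omega
    _ ≤ P.ncard :=
        sum_ncard_inter_le (G.coe_edgeFinset ▸ hs.pairwiseDisjoint_subdividedEdge)
          (hs.edgeSet_finite.subset hP.1)

end IsSubdivision

end Subdivision

theorem subdivision_peds_lower_bound_general {V W : Type*} [Finite V] {r : ℕ} (hr : 1 ≤ r)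
    {G : SimpleGraph V} (hdeg : ∀ v, (G.neighborSet v).ncard ≤ r) {k : ℕ} {H : SimpleGraph W}
    {ι : V → W} {p : V → V → ℕ → W} (hsub : IsSubdivision G k H ι p) {P : Set (Sym2 W)}
    (hP : IsEdgeDominating H P) :
    (G.edgeSet.ncard : ℚ) / (2 * r - 1) * (2 * r * k - k + 1) ≤ P.ncard := by
  have hpos : (0 : ℚ) < 2 * r - 1 := by
    have : (1 : ℚ) ≤ r := mod_cast hr
    linarith
  have hdom : (G.edgeSet.ncard : ℚ) ≤ (heavyEdges G p k P).ncard * (2 * r - 1) := by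
    have := (hsub.isEdgeDominating_heavyEdges hP).ncard_edgeSet_le hdeg
    rw [← Nat.cast_le (α := ℚ)] at this
    push_cast [show 1 ≤ 2 * r by omega] at this
    exact this
  calc (G.edgeSet.ncard : ℚ) / (2 * r - 1) * (2 * r * k - k + 1)
      = k * G.edgeSet.ncard + G.edgeSet.ncard / (2 * r - 1) := by field_simp
    _ ≤ k * G.edgeSet.ncard + (heavyEdges G p k P).ncard := by
        gcongr
        exact (div_le_iff₀ hpos).2 hdom
    _ ≤ P.ncard := mod_cast hsub.mul_ncard_edgeSet_add_ncard_heavyEdges_le hP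

/-- Any perfect edge dominating set `P` of the `3k`-subdivision of an `r`-regular
graph (`r ≥ 1`) on `n` vertices satisfies `|P| ≥ (n r / (2 (2r - 1))) (2rk - k + 1)`. -/
theorem subdivision_peds_lower_bound {V W : Type*} [Fintype V] [Fintype W]
    (r : ℕ) (hr : 1 ≤ r) (G : SimpleGraph V) (hreg : IsRegular' G r) (k : ℕ)
    (H : SimpleGraph W) (ι : V → W) (p : V → V → ℕ → W)
    (hsub : IsSubdivision G k H ι p) (P : Set (Sym2 W)) (hP : IsPEDS H P) :
    ((Fintype.card V : ℚ) * r) / (2 * (2 * r - 1)) * (2 * r * k - k + 1)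
      ≤ (P.ncard : ℚ) := by
  rw [show (Fintype.card V : ℚ) * r = 2 * G.edgeSet.ncard
    from mod_cast hreg.card_mul_eq_two_mul_ncard_edgeSet, mul_div_mul_left _ _ two_ne_zero]
  exact subdivision_peds_lower_bound_general hr (fun v ↦ (hreg v).le) hsub hP.isEdgeDominating
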